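/- Fix a real α with 3/2 < α < 2. For even integers n ≥ 4, define λ_k(α,n) = 2 ∑_{j=1}^{n−1} j^{−α} cos(2πkj/n), λ̃_k(α,n) = (λ_k(α,n) − λ_{n/2}(α,n)) / (λ_0(α,n) − λ_{n/2}(α,n)), and S_q(α,n) = (1/n) ∑_{k=1}^{n−1} (1 − λ̃_k(α,n))^{−q}. Then S_2(α,n) → ∞ as even n → ∞, while S_1(α,n) remains bounded; consequently the asymptotic fidelity F(α,n) = S_1(α,n)^2 / S_2(α,n) tends to 0. -/

import Mathlib

/-- Eigenvalues of the long-range circulant Hamiltonian. -/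
noncomputable def lam (α : ℝ) (n k : ℕ) : ℝ :=
  2 * ∑ j ∈ Finset.Icc 1 (n - 1), (j : ℝ) ^ (-α) * Real.cos (2 * Real.pi * k * j / n)

/-- Rescaled eigenvalues `λ̃_k = (λ_k - λ_{n/2})/(λ_0 - λ_{n/2})` for even `n`. -/
noncomputable def lamT (α : ℝ) (n k : ℕ) : ℝ :=
  (lam α n k - lam α n (n / 2)) / (lam α n 0 - lam α n (n / 2))

/-- `S_q(α,n) = (1/n) ∑_{k=1}^{n-1} (1 - λ̃_k)^{-q}`. -/
noncomputable def Sq (q : ℕ) (α : ℝ) (n : ℕ) : ℝ :=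
  (1 / (n : ℝ)) * ∑ k ∈ Finset.Icc 1 (n - 1), (1 - lamT α n k) ^ (-(q : ℤ))

/-- The gap function: half of `λ_0 - λ_k`. -/
noncomputable def gap (α : ℝ) (n k : ℕ) : ℝ :=
  ∑ j ∈ Finset.Icc 1 (n - 1), (j : ℝ) ^ (-α) * (1 - Real.cos (2 * Real.pi * k * j / n))

lemma lam_sub (α : ℝ) (n k : ℕ) : lam α n 0 - lam α n k = 2 * gap α n k := by
  unfold lam gap
  rw [← mul_sub, ← Finset.sum_sub_distrib]
  congr 1
  apply Finset.sum_congr rfl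
  intro j _
  simp
  ring

lemma gap_term_nonneg (α x : ℝ) (j : ℕ) : 0 ≤ (j : ℝ) ^ (-α) * (1 - Real.cos x) :=
  mul_nonneg (by positivity) (by linarith [Real.cos_le_one x])

lemma gap_nonneg (α : ℝ) (n k : ℕ) : 0 ≤ gap α n k :=
  Finset.sum_nonneg fun j _ => gap_term_nonneg _ _ _

lemma gap_half_ge (α : ℝ) (n : ℕ) (hn : 1 ≤ n) : 2 ≤ gap α (2 * n) n := by
  have hn' : (n : ℝ) ≠ 0 := by positivity
  have h := Finset.single_le_sum (s := Finset.Icc 1 (2 * n - 1))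
    (f := fun j : ℕ => (j : ℝ) ^ (-α) * (1 - Real.cos (2 * Real.pi * n * j / (2 * n : ℕ))))
    (fun j _ => gap_term_nonneg _ _ _) (a := 1) (by simp; omega)
  have e : 2 * Real.pi * n * (1 : ℕ) / (2 * n : ℕ) = Real.pi := by
    push_cast
    field_simp
  simp only [e] at h
  unfold gap
  refine le_trans ?_ h
  simp
  norm_num

lemma one_sub_lamT (α : ℝ) (n k : ℕ) (hn : 1 ≤ n) :
    1 - lamT α (2 * n) k = gap α (2 * n) k / gap α (2 * n) n := by
  have hD := gap_half_ge α n hn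
  have e : 2 * n / 2 = n := by omega
  have h1 := lam_sub α (2 * n) k
  have h2 := lam_sub α (2 * n) n
  unfold lamT
  rw [e, h2, one_sub_div (by linarith), ← h2,
    show lam α (2*n) 0 - lam α (2*n) n - (lam α (2*n) k - lam α (2*n) n)
      = lam α (2*n) 0 - lam α (2*n) k by ring, h1, h2]
  rw [mul_div_mul_left _ _ two_ne_zero]

lemma gap_one_le (α : ℝ) (h1 : 1 < α) (h2 : α < 2) (n : ℕ) (hn : 1 ≤ n) :
    gap α n 1 ≤ 2 * Real.pi ^ 2 * (n : ℝ) ^ (1 - α) := by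
  have hn0 : (0 : ℝ) < n := by positivity
  unfold gap
  have hb : ∀ j ∈ Finset.Icc 1 (n - 1),
      (j : ℝ) ^ (-α) * (1 - Real.cos (2 * Real.pi * (1 : ℕ) * j / n))
        ≤ 2 * Real.pi ^ 2 * (n : ℝ) ^ (-α) := by
    intro j hj
    rw [Finset.mem_Icc] at hj
    have hj0 : (0 : ℝ) < j := by exact_mod_cast hj.1
    have hjn : (j : ℝ) ≤ n := by exact_mod_cast (by omega : j ≤ n)
    have hc := Real.one_sub_sq_div_two_le_cos (x := 2 * Real.pi * (1 : ℕ) * j / n)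
    have hp : (j : ℝ) ^ (2 - α) ≤ (n : ℝ) ^ (2 - α) :=
      Real.rpow_le_rpow hj0.le hjn (by linarith)
    have ej : (j : ℝ) ^ (2 - α) = (j : ℝ) ^ 2 * (j : ℝ) ^ (-α) := by
      rw [sub_eq_add_neg, Real.rpow_add hj0]; norm_num
    have en : (n : ℝ) ^ (2 - α) = (n : ℝ) ^ 2 * (n : ℝ) ^ (-α) := by
      rw [sub_eq_add_neg, Real.rpow_add hn0]; norm_num
    calc _ ≤ (j : ℝ) ^ (-α) * ((2 * Real.pi * (1 : ℕ) * j / n) ^ 2 / 2) := by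
          apply mul_le_mul_of_nonneg_left _ (by positivity)
          linarith
      _ = 2 * Real.pi ^ 2 / n ^ 2 * (j : ℝ) ^ (2 - α) := by
          rw [ej]; push_cast; field_simp
      _ ≤ 2 * Real.pi ^ 2 / n ^ 2 * (n : ℝ) ^ (2 - α) := by gcongr
      _ = _ := by rw [en]; field_simp
  refine (Finset.sum_le_card_nsmul _ _ _ hb).trans ?_
  rw [Nat.card_Icc, nsmul_eq_mul, sub_eq_add_neg, Real.rpow_add hn0, Real.rpow_one]
  have : ((n - 1 + 1 - 1 : ℕ) : ℝ) ≤ n := by exact_mod_cast (by omega)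
  have h3 : 0 ≤ 2 * Real.pi ^ 2 * (n : ℝ) ^ (-α) := by positivity
  nlinarith [mul_le_mul_of_nonneg_right this h3]

lemma gap_ge (α : ℝ) (h1 : 1 < α) (h2 : α < 2) (n k : ℕ) (hk : 1 ≤ k) (hkn : k ≤ n) (hn : 2 ≤ n) :
    1 / 4 * ((k : ℝ) / n) ^ (α - 1) ≤ gap α (2 * n) k := by
  have hn0 : (0 : ℝ) < n := by positivity
  have hk0 : (0 : ℝ) < k := by positivity
  set m := n / k with hm
  have hm1 : 1 ≤ m := (Nat.one_le_div_iff hk).2 hkn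
  have hmk : m * k ≤ n := Nat.div_mul_le_self n k
  have hmn : m ≤ n := Nat.div_le_self n k
  have hm2 : n ≤ 2 * m * k := by
    have : n < (m + 1) * k := by
      rw [hm]; exact Nat.lt_mul_of_div_lt (Nat.lt_succ_self _) hk
    nlinarith
  have hm0 : (0 : ℝ) < m := by positivity
  have hmkR : (m : ℝ) * k ≤ n := by exact_mod_cast hmk
  have hm2R : (n : ℝ) ≤ 2 * m * k := by exact_mod_cast hm2
  have hsub : Finset.Icc 1 m ⊆ Finset.Icc 1 (2 * n - 1) :=
    Finset.Icc_subset_Icc le_rfl (by omega)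
  have hs : ∑ j ∈ Finset.Icc 1 m, (2 * ((k : ℝ) / n) ^ 2 * ((k : ℝ) / n) ^ (α - 1)) * j ≤ gap α (2 * n) k := by
    unfold gap
    refine le_trans ?_ (Finset.sum_le_sum_of_subset_of_nonneg hsub
      fun j _ _ => gap_term_nonneg _ _ _)
    apply Finset.sum_le_sum
    intro j hj
    rw [Finset.mem_Icc] at hj
    have hj0 : (0 : ℝ) < j := by exact_mod_cast hj.1
    have hjm : (j : ℝ) ≤ m := by exact_mod_cast hj.2
    have hjk : (j : ℝ) * k ≤ n := le_trans (by gcongr) hmkR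
    have ex : 2 * Real.pi * k * j / (2 * n : ℕ) = Real.pi * (j * k / n) := by
      push_cast; field_simp
    have hx1 : (j : ℝ) * k / n ≤ 1 := (div_le_one hn0).2 hjk
    have hx0 : 0 ≤ (j : ℝ) * k / n := by positivity
    have hcos : 2 * ((j : ℝ) * k / n) ^ 2 ≤ 1 - Real.cos (Real.pi * (j * k / n)) := by
      have := Real.cos_le_one_sub_mul_cos_sq (x := Real.pi * (j * k / n)) (by
        rw [abs_of_nonneg (by positivity)]
        nlinarith [Real.pi_pos])
      have e : 2 / Real.pi ^ 2 * (Real.pi * (j * k / n)) ^ 2 = 2 * ((j : ℝ) * k / n) ^ 2 := by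
        field_simp
      linarith
    rw [ex]
    have ej : (j : ℝ) ^ (-α) * j ^ 2 = (j : ℝ) ^ (1 - α) * j := by
      rw [sub_eq_add_neg, Real.rpow_add hj0, Real.rpow_one]; ring
    have hp : ((k : ℝ) / n) ^ (α - 1) ≤ (j : ℝ) ^ (1 - α) := by
      rw [show (1 - α) = -(α - 1) by ring, Real.rpow_neg hj0.le, ← Real.inv_rpow hj0.le]
      apply Real.rpow_le_rpow (by positivity) _ (by linarith)
      rw [div_le_iff₀ hn0, inv_mul_eq_div, le_div_iff₀ hj0]; linarith
    calc _ ≤ (2 * ((k : ℝ) / n) ^ 2 * (j : ℝ) ^ (1 - α)) * j := by gcongr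
      _ = (j : ℝ) ^ (-α) * (2 * ((j : ℝ) * k / n) ^ 2) := by
        rw [mul_assoc, ← ej]; ring
      _ ≤ _ := by gcongr
  refine le_trans ?_ hs
  rw [← Finset.mul_sum]
  have hsum : ∀ m : ℕ, (m : ℝ) ^ 2 / 2 ≤ ∑ j ∈ Finset.Icc 1 m, (j : ℝ) := by
    intro m
    induction m with
    | zero => simp
    | succ m ih =>
      rw [Finset.sum_Icc_succ_top (by omega)]
      push_cast
      nlinarith [(Nat.cast_nonneg m : (0:ℝ) ≤ m)]
  have hq : 1 / 4 ≤ 2 * ((k : ℝ) / n) ^ 2 * (m ^ 2 / 2) := by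
    have : 1 / 2 ≤ (k : ℝ) / n * m := by
      rw [div_mul_eq_mul_div, div_le_div_iff₀ (by norm_num) hn0]; linarith
    nlinarith
  calc 1 / 4 * ((k : ℝ) / n) ^ (α - 1)
      ≤ (2 * ((k : ℝ) / n) ^ 2 * (m ^ 2 / 2)) * ((k : ℝ) / n) ^ (α - 1) := by gcongr
    _ = 2 * ((k : ℝ) / n) ^ 2 * ((k : ℝ) / n) ^ (α - 1) * (m ^ 2 / 2) := by ring
    _ ≤ _ := by gcongr; exact hsum m

lemma gap_symm (α : ℝ) (n k : ℕ) (hn : 1 ≤ n) (hk : k ≤ n) : gap α n (n - k) = gap α n k := by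
  have hn0 : (0 : ℝ) < n := by positivity
  unfold gap
  apply Finset.sum_congr rfl
  intro j _
  rw [Nat.cast_sub hk]
  have : 2 * Real.pi * ((n : ℝ) - k) * j / n = j * (2 * Real.pi) - 2 * Real.pi * k * j / n := by
    field_simp
  rw [this, Real.cos_nat_mul_two_pi_sub]

lemma inv_gap_le (α : ℝ) (h1 : 1 < α) (h2 : α < 2) (n k : ℕ) (hk : 1 ≤ k) (hkn : k ≤ n)
    (hn : 2 ≤ n) : (gap α (2 * n) k)⁻¹ ≤ 4 * (n : ℝ) ^ (α - 1) * (k : ℝ) ^ (-(α - 1)) := by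
  have hn0 : (0 : ℝ) < n := by positivity
  have hk0 : (0 : ℝ) < k := by positivity
  refine (inv_anti₀ (by positivity) (gap_ge α h1 h2 n k hk hkn hn)).trans (le_of_eq ?_)
  rw [Real.div_rpow hk0.le hn0.le, Real.rpow_neg hk0.le]
  have := Real.rpow_pos_of_pos hk0 (α - 1)
  have := Real.rpow_pos_of_pos hn0 (α - 1)
  field_simp

lemma sum_rpow_le (s : ℝ) (hs0 : 0 < s) (hs1 : s < 1) (n : ℕ) :
    ∑ k ∈ Finset.Icc 1 n, (k : ℝ) ^ (-s) ≤ (n : ℝ) ^ (1 - s) / (1 - s) := by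
  have h1s : 0 < 1 - s := by linarith
  induction n with
  | zero => simp [Real.zero_rpow h1s.ne']
  | succ n ih =>
    rw [Finset.sum_Icc_succ_top (by omega)]
    set x : ℝ := ((n + 1 : ℕ) : ℝ) with hx
    have hx0 : 0 < x := by positivity
    have hx1 : 1 ≤ x := by rw [hx]; push_cast; linarith [(Nat.cast_nonneg n : (0:ℝ) ≤ n)]
    have hnx : (n : ℝ) = x * (1 + -x⁻¹) := by rw [hx]; push_cast; field_simp; ring
    have hinv : x⁻¹ ≤ 1 := inv_le_one_of_one_le₀ hx1
    have hB := rpow_one_add_le_one_add_mul_self (s := -x⁻¹) (by linarith) (p := 1 - s)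
      h1s.le (by linarith)
    have hxs : x ^ (1 - s) = x * x ^ (-s) := by
      rw [sub_eq_add_neg, Real.rpow_add hx0, Real.rpow_one]
    have hp : 0 < x ^ (-s) := Real.rpow_pos_of_pos hx0 _
    have hn : (n : ℝ) ^ (1 - s) ≤ x ^ (1 - s) - (1 - s) * x ^ (-s) := by
      rw [hnx, Real.mul_rpow hx0.le (by linarith), hxs]
      calc _ ≤ x * x ^ (-s) * (1 + (1 - s) * -x⁻¹) := by gcongr
        _ = _ := by field_simp; ring
    calc _ ≤ (n : ℝ) ^ (1 - s) / (1 - s) + x ^ (-s) := by gcongr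
      _ ≤ (x ^ (1 - s) - (1 - s) * x ^ (-s)) / (1 - s) + x ^ (-s) := by gcongr
      _ = _ := by field_simp; ring

lemma gap_half_le (α : ℝ) (h1 : 1 < α) (n k : ℕ) :
    gap α n k ≤ 2 * ∑' j : ℕ, (j : ℝ) ^ (-α) := by
  have hsm : Summable (fun j : ℕ => (j : ℝ) ^ (-α)) := Real.summable_nat_rpow.2 (by linarith)
  have := hsm.sum_le_tsum (Finset.Icc 1 (n - 1)) (fun j _ => by positivity)
  refine le_trans ?_ (mul_le_mul_of_nonneg_left this zero_le_two)
  unfold gap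
  rw [Finset.mul_sum]
  apply Finset.sum_le_sum
  intro j _
  have hp : 0 ≤ (j : ℝ) ^ (-α) := by positivity
  have := Real.neg_one_le_cos (2 * Real.pi * k * j / n)
  nlinarith

lemma Sq_one_bound (α : ℝ) (h1 : 3 / 2 < α) (h2 : α < 2) (n : ℕ) (hn : 2 ≤ n) :
    |Sq 1 α (2 * n)| ≤ 16 * (∑' j : ℕ, (j : ℝ) ^ (-α)) / (2 - α) := by
  have hn0 : (0 : ℝ) < n := by positivity
  set Z := ∑' j : ℕ, (j : ℝ) ^ (-α) with hZ
  have hZ0 : 0 ≤ Z := tsum_nonneg fun j => by positivity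
  have hD := gap_half_ge α n (by omega)
  have hD2 := gap_half_le α (by linarith) (2 * n) n
  set D := gap α (2 * n) n with hDdef
  have hS : Sq 1 α (2 * n) = 1 / ((2 * n : ℕ) : ℝ) *
      ∑ k ∈ Finset.Icc 1 (2 * n - 1), D * (gap α (2 * n) k)⁻¹ := by
    unfold Sq
    congr 1
    apply Finset.sum_congr rfl
    intro k _
    rw [one_sub_lamT α n k (by omega)]
    rw [← hDdef, Nat.cast_one, zpow_neg_one, inv_div, div_eq_mul_inv]
  have hSn : 0 ≤ Sq 1 α (2 * n) := by
    rw [hS]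
    refine mul_nonneg (by positivity) (Finset.sum_nonneg fun k _ => mul_nonneg (by linarith) ?_)
    exact inv_nonneg.2 (gap_nonneg _ _ _)
  rw [abs_of_nonneg hSn, hS]
  have hpt : ∀ k ∈ Finset.Icc 1 (2 * n - 1), (gap α (2 * n) k)⁻¹ ≤
      4 * (n : ℝ) ^ (α - 1) * ((k : ℝ) ^ (-(α - 1)) + ((2 * n - k : ℕ) : ℝ) ^ (-(α - 1))) := by
    intro k hk
    rw [Finset.mem_Icc] at hk
    have a1 : 0 ≤ (k : ℝ) ^ (-(α - 1)) := by positivity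
    have a2 : 0 ≤ ((2 * n - k : ℕ) : ℝ) ^ (-(α - 1)) := by positivity
    have a3 : 0 ≤ 4 * (n : ℝ) ^ (α - 1) := by positivity
    rcases le_total k n with h | h
    · refine (inv_gap_le α (by linarith) h2 n k hk.1 h hn).trans ?_
      gcongr; linarith
    · rw [← gap_symm α (2 * n) k (by omega) (by omega)]
      refine (inv_gap_le α (by linarith) h2 n (2 * n - k) (by omega) (by omega) hn).trans ?_
      gcongr; linarith
  have hrefl : ∑ k ∈ Finset.Icc 1 (2 * n - 1), ((2 * n - k : ℕ) : ℝ) ^ (-(α - 1))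
      = ∑ k ∈ Finset.Icc 1 (2 * n - 1), (k : ℝ) ^ (-(α - 1)) := by
    apply Finset.sum_nbij' (fun k => 2 * n - k) (fun k => 2 * n - k)
    · intro k hk; rw [Finset.mem_Icc] at *; omega
    · intro k hk; rw [Finset.mem_Icc] at *; omega
    · intro k hk; rw [Finset.mem_Icc] at hk; omega
    · intro k hk; rw [Finset.mem_Icc] at hk; omega
    · intro k _; rfl
  have hsum : ∑ k ∈ Finset.Icc 1 (2 * n - 1), (k : ℝ) ^ (-(α - 1)) ≤
      (2 * n : ℝ) ^ (2 - α) / (2 - α) := by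
    have h := sum_rpow_le (α - 1) (by linarith) (by linarith) (2 * n)
    rw [show 1 - (α - 1) = 2 - α by ring] at h
    push_cast at h
    refine le_trans (Finset.sum_le_sum_of_subset_of_nonneg
      (Finset.Icc_subset_Icc le_rfl (by omega)) fun j _ _ => by positivity) h
  have htot : ∑ k ∈ Finset.Icc 1 (2 * n - 1), (gap α (2 * n) k)⁻¹ ≤
      8 * (2 * n : ℝ) / (2 - α) := by
    refine (Finset.sum_le_sum hpt).trans ?_
    rw [← Finset.mul_sum, Finset.sum_add_distrib, hrefl]
    have hα : 0 < 2 - α := by linarith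
    calc _ ≤ 4 * (2 * n : ℝ) ^ (α - 1) * ((2 * n : ℝ) ^ (2 - α) / (2 - α) +
            (2 * n : ℝ) ^ (2 - α) / (2 - α)) := by
          gcongr
          · linarith
          · linarith
      _ = 8 * ((2 * n : ℝ) ^ (α - 1) * (2 * n : ℝ) ^ (2 - α)) / (2 - α) := by ring
      _ = _ := by
          rw [← Real.rpow_add (by positivity), show α - 1 + (2 - α) = 1 by ring, Real.rpow_one]
  rw [← Finset.mul_sum]
  have hα : 0 < 2 - α := by linarith
  have hT0 : 0 ≤ ∑ k ∈ Finset.Icc 1 (2 * n - 1), (gap α (2 * n) k)⁻¹ :=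
    Finset.sum_nonneg fun k _ => inv_nonneg.2 (gap_nonneg _ _ _)
  rw [← hZ] at hD2
  clear hrefl hsum hpt hSn hS
  clear_value Z D
  calc _ ≤ 1 / ((2 * n : ℕ) : ℝ) * (2 * Z * (8 * (2 * n : ℝ) / (2 - α))) :=
        mul_le_mul_of_nonneg_left (mul_le_mul hD2 htot hT0 (by linarith)) (by positivity)
    _ = _ := by push_cast; field_simp; ring

lemma Sq_two_ge (α : ℝ) (h1 : 3 / 2 < α) (h2 : α < 2) (n : ℕ) (hn : 2 ≤ n) :
    1 / Real.pi ^ 4 * ((2 * n : ℕ) : ℝ) ^ (2 * α - 3) ≤ Sq 2 α (2 * n) := by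
  have hN0 : (0 : ℝ) < (2 * n : ℕ) := by positivity
  have hD := gap_half_ge α n (by omega)
  have hg0 : 0 < gap α (2 * n) 1 := lt_of_lt_of_le (by positivity)
    (gap_ge α (by linarith) h2 n 1 le_rfl (by omega) hn)
  have hg := gap_one_le α (by linarith) h2 (2 * n) (by omega)
  set N : ℝ := ((2 * n : ℕ) : ℝ) with hN
  have h := Finset.single_le_sum (s := Finset.Icc 1 (2 * n - 1))
    (f := fun k : ℕ => (1 - lamT α (2 * n) k) ^ (-((2 : ℕ) : ℤ)))
    (fun k _ => by
      rw [zpow_neg, zpow_natCast]; positivity) (a := 1) (by simp; omega)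
  unfold Sq
  refine le_trans ?_ (mul_le_mul_of_nonneg_left h (by positivity))
  rw [one_sub_lamT α n 1 (by omega), zpow_neg, zpow_natCast, ← inv_pow, inv_div]
  have hp : 0 < N ^ (1 - α) := Real.rpow_pos_of_pos hN0 _
  have hr : 1 / Real.pi ^ 2 * N ^ (α - 1) ≤ gap α (2 * n) n / gap α (2 * n) 1 := by
    calc 1 / Real.pi ^ 2 * N ^ (α - 1) = 2 / (2 * Real.pi ^ 2 * N ^ (1 - α)) := by
          rw [show α - 1 = -(1 - α) by ring, Real.rpow_neg hN0.le]; field_simp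
      _ ≤ _ := by gcongr
  calc _ = 1 / N * (1 / Real.pi ^ 2 * N ^ (α - 1)) ^ 2 := by
        rw [show 2 * α - 3 = (α - 1) + (α - 1) + (-1) by ring, Real.rpow_add hN0,
          Real.rpow_add hN0, Real.rpow_neg_one]
        field_simp
    _ ≤ _ := by gcongr

/-- for `3/2 < α < 2`, along even `n → ∞`: `S_2(α,n) → ∞`,
`S_1(α,n)` remains bounded, and the fidelity `F = S_1²/S_2` tends to `0`. -/
theorem stmt_18 (α : ℝ) (h1 : 3 / 2 < α) (h2 : α < 2) :
    Filter.Tendsto (fun n : ℕ => Sq 2 α (2 * n)) Filter.atTop Filter.atTop ∧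
    (∃ M : ℝ, ∀ n : ℕ, 2 ≤ n → |Sq 1 α (2 * n)| ≤ M) ∧
    Filter.Tendsto (fun n : ℕ => (Sq 1 α (2 * n)) ^ 2 / Sq 2 α (2 * n))
      Filter.atTop (nhds 0) := by
  have hA : Filter.Tendsto (fun n : ℕ => Sq 2 α (2 * n)) Filter.atTop Filter.atTop := by
    have t1 : Filter.Tendsto (fun n : ℕ => 2 * n) Filter.atTop Filter.atTop :=
      Filter.tendsto_id.const_mul_atTop' (by norm_num)
    have t2 := (tendsto_rpow_atTop (y := 2 * α - 3) (by linarith)).comp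
      (tendsto_natCast_atTop_atTop.comp t1)
    have t3 := t2.const_mul_atTop (r := 1 / Real.pi ^ 4) (by positivity)
    refine Filter.tendsto_atTop_mono' _ ?_ t3
    filter_upwards [Filter.eventually_ge_atTop 2] with n hn
    exact Sq_two_ge α h1 h2 n hn
  refine ⟨hA, ⟨_, Sq_one_bound α h1 h2⟩, ?_⟩
  have t := hA.const_div_atTop ((16 * (∑' j : ℕ, (j : ℝ) ^ (-α)) / (2 - α)) ^ 2)
  refine tendsto_of_tendsto_of_tendsto_of_le_of_le' tendsto_const_nhds t ?_ ?_
  · filter_upwards [hA.eventually_gt_atTop 0] with n hn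
    positivity
  · filter_upwards [hA.eventually_gt_atTop 0, Filter.eventually_ge_atTop 2] with n hn h
    have := Sq_one_bound α h1 h2 n h
    have h3 := sq_le_sq' (abs_le.1 this).1 (abs_le.1 this).2
    gcongr
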